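/- Let n ≥ 1, L ≥ 2, let m₁,…,m_L be positive integers with m₁+⋯+m_L = n, and let λ₁* < ⋯ < λ_L* be real numbers with Σᵢ mᵢ·λᵢ* = 0. Set r := min{λ*_{i+1} − λ*_i : 1 ≤ i ≤ L−1} and let ε be a real number with 0 < ε ≤ r/4. Let H : B₄(0) → Sym₀(n) be a C^∞ map on the open Euclidean ball of radius 4 in ℝⁿ such that for every x in the closed ball of radius 2 and every i ∈ {1,…,L}, exactly mᵢ eigenvalues of H(x), counted with multiplicity, lie in the open interval (λᵢ* − ε, λᵢ* + ε). Then there exist C^∞ functions λ₁,…,λ_L : B₂(0) → ℝ, C^∞ maps Sᵢ : B₂(0) → Sym₀(mᵢ) for i = 1,…,L, and a C^∞ map P : B₂(0) → O(n) such that for every x ∈ B₂(0): (i) P(x)·H(x)·P(x)ᵀ equals the block diagonal matrix with diagonal blocks λ₁(x)·I_{m₁}+S₁(x), …, λ_L(x)·I_{m_L}+S_L(x); (ii) min{|λ_{i+1}(x) − λ_i(x)| : 1 ≤ i ≤ L−1} ≥ r/2; (iii) max{|λ_i(x) − λ_i*| : 1 ≤ i ≤ L} ≤ ε; and (iv) max{‖S_i(x)‖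 : 1 ≤ i ≤ L} ≤ 4ε. -/

import Mathlib

open Matrix Metric

/-- The operator norm (ℓ²-operator norm) of a square real matrix. -/
noncomputable def matrixOpNorm {k : ℕ} (A : Matrix (Fin k) (Fin k) ℝ) : ℝ :=
  ‖(Matrix.toEuclideanCLM (𝕜 := ℝ) A : EuclideanSpace ℝ (Fin k) →L[ℝ] EuclideanSpace ℝ (Fin k))‖

/-! At a positive `b`, the derivative `x ↦ b * x + x * b` of squaring is invertible, because `b`
lies within distance less than `c = ‖b‖` of the scalar `c`. Hence the positive square root is
smooth, and with it the unitary polar factor. For self-adjoint `a` with `α, β` off the spectrum, the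
polar factor of `(a - α) * (a - β)` is the sign of this product, so the spectral projection of `a`
onto `(α, β)` is half of one minus that factor, and is smooth as well.

Over a compact star-shaped parameter set, write `p i x` for the spectral projections of the family.
For nearby `y, z` the element `∑ i, p i y * p i z` is close to `∑ i, p i z = 1`, hence invertible,
and it carries `p i z` to `p i y`. Multiplying such elements along the segment from the base point
to `x` and taking the unitary polar factor, which still intertwines the self-adjoint projections,
rotates the clusters at the base point smoothly into those at `x`. Composed with an eigenbasis at
the base point, this rotation block diagonalizes the family. Each block is within `ε` of a scalar,
so it is its mean eigenvalue plus a traceless matrix of norm at most `2 * ε`. -/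

section Anticommutator

variable {A : Type*} [NormedRing A] [NormedAlgebra ℝ A]

/-- The operator `x ↦ b * x + x * b` on a normed algebra: the derivative of `x ↦ x * x` at `b`. -/
noncomputable def anticommutator (b : A) : A →L[ℝ] A :=
  ContinuousLinearMap.mul ℝ A b + (ContinuousLinearMap.mul ℝ A).flip b

theorem anticommutator_apply (b x : A) : anticommutator b x = b * x + x * b := rfl

theorem hasStrictFDerivAt_mul_self (b : A) :
    HasStrictFDerivAt (fun x : A => x * x) (anticommutator b) b :=
  ((hasStrictFDerivAt_id b).mul' (hasStrictFDerivAt_id b)).congr_fderiv rfl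

theorem norm_anticommutator_le (b : A) : ‖anticommutator b‖ ≤ 2 * ‖b‖ :=
  ContinuousLinearMap.opNorm_le_bound _ (by positivity) fun x => by
    calc ‖b * x + x * b‖ ≤ ‖b‖ * ‖x‖ + ‖x‖ * ‖b‖ :=
          norm_add_le_of_le (norm_mul_le _ _) (norm_mul_le _ _)
      _ = 2 * ‖b‖ * ‖x‖ := by ring

theorem isUnit_anticommutator_of_norm_algebraMap_sub_lt [CompleteSpace A] {b : A} {c : ℝ}
    (h : ‖algebraMap ℝ A c - b‖ < c) : IsUnit (anticommutator b) := by
  have hc : 0 < c := (norm_nonneg _).trans_lt h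
  let d := (2 * c)⁻¹ • anticommutator (algebraMap ℝ A c - b)
  have hd : ‖d‖ < 1 := by
    rw [norm_smul, Real.norm_of_nonneg (by positivity), inv_mul_lt_iff₀ (by positivity), mul_one]
    exact (norm_anticommutator_le _).trans_lt (by linarith)
  have hb : anticommutator b = (2 * c) • (1 - d) := by
    ext x
    have hcancel : (2 * c) • d = anticommutator (algebraMap ℝ A c - b) :=
      smul_inv_smul₀ (by positivity) _
    rw [smul_sub, hcancel]
    simp only [anticommutator_apply, _root_.sub_apply, _root_.smul_apply,
      one_apply_eq_self, sub_mul, mul_sub, ← Algebra.commutes c x, ← Algebra.smul_def,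
      mul_smul, two_smul]
    abel
  rw [hb.trans (Algebra.smul_def (2 * c) (1 - d))]
  exact ((isUnit_iff_ne_zero.2 (by positivity)).map _).mul (isUnit_one_sub_of_norm_lt_one hd)

end Anticommutator

section PolarUnitary

open scoped Ring Topology

variable {A : Type*} [NormedRing A] [StarRing A] [NormedAlgebra ℝ A] [PartialOrder A]
  [StarOrderedRing A] [NonnegSpectrumClass ℝ A]
  [IsometricContinuousFunctionalCalculus ℝ A IsSelfAdjoint]

theorem norm_algebraMap_norm_sub_lt [Nontrivial A] {b : A} (hb : IsStrictlyPositive b) :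
    ‖algebraMap ℝ A ‖b‖ - b‖ < ‖b‖ := by
  have hsa : IsSelfAdjoint b := hb.isSelfAdjoint
  have hcfc : algebraMap ℝ A ‖b‖ - b = cfc (fun t : ℝ => ‖b‖ - t) b := by
    rw [cfc_sub .., cfc_const .., cfc_id' ..]
  rw [hcfc]
  refine norm_cfc_lt (norm_pos_iff.2 hb.isUnit.ne_zero) fun t ht => ?_
  have htpos : 0 < t := hb.spectrum_pos ht
  have htle : ‖t‖ ≤ ‖b‖ := IsometricContinuousFunctionalCalculus.norm_spectrum_le b ht
  rw [Real.norm_eq_abs, abs_of_pos htpos] at htle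
  rw [Real.norm_eq_abs, abs_lt]
  constructor <;> linarith

theorem isUnit_anticommutator_of_isStrictlyPositive [CompleteSpace A] {b : A}
    (hb : IsStrictlyPositive b) : IsUnit (anticommutator b) := by
  cases subsingleton_or_nontrivial A
  · exact isUnit_of_subsingleton _
  · exact isUnit_anticommutator_of_norm_algebraMap_sub_lt (norm_algebraMap_norm_sub_lt hb)

theorem contDiffOn_sqrt [CompleteSpace A] [ContinuousStar A] {k : WithTop ℕ∞} (hk : k ≠ 0) :
    ContDiffOn ℝ k (CFC.sqrt : A → A) {a | IsStrictlyPositive a} := by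
  intro a (ha : IsStrictlyPositive a)
  let b := CFC.sqrt a
  have hbb : b * b = a := CFC.sqrt_mul_sqrt_self a ha.nonneg
  obtain ⟨u, hu⟩ := isUnit_anticommutator_of_isStrictlyPositive (IsStrictlyPositive.sqrt a ha)
  let D : A ≃L[ℝ] A := ContinuousLinearEquiv.unitsEquiv ℝ A u
  have hsq : HasStrictFDerivAt (fun x : A => x * x) (D : A →L[ℝ] A) b :=
    (hasStrictFDerivAt_mul_self b).congr_fderiv hu.symm
  have hsmooth : ContDiffAt ℝ k (fun x : A => x * x) b := by fun_prop
  have hinv : ContDiffAt ℝ k (hsmooth.localInverse hsq.hasFDerivAt hk) a := by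
    simpa only [hbb] using hsmooth.to_localInverse hsq.hasFDerivAt hk
  have hcont : Filter.Tendsto CFC.sqrt (𝓝[{a | IsStrictlyPositive a}] a) (𝓝 b) :=
    (CFC.continuousOn_sqrt.mono fun a ha => ha.nonneg) a ha
  refine hinv.contDiffWithinAt.congr_of_eventuallyEq_of_mem ?_ ha
  filter_upwards [hcont.eventually hsq.eventually_left_inverse, self_mem_nhdsWithin] with y hy hpos
  rw [CFC.sqrt_mul_sqrt_self y hpos.nonneg] at hy
  exact hy.symm

/-- The unitary factor of the polar decomposition `v = u * |v|` of a unit `v`. The inverse is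
`Ring.inverse`, so `polarUnitary v = 0` when `|v|` is not invertible. -/
noncomputable def polarUnitary (v : A) : A := v * (CFC.abs v)⁻¹ʳ

theorem isUnit_abs {v : A} (hv : IsUnit v) : IsUnit (CFC.abs v) := by
  refine CFC.isUnit_sqrt_iff_isStrictlyPositive.2 ?_
  simpa using hv.isStrictlyPositive_star_left_conjugate_iff.2 (isStrictlyPositive_one (A := A))

theorem polarUnitary_mem_unitary {v : A} (hv : IsUnit v) : polarUnitary v ∈ unitary A := by
  have habs := isUnit_abs hv
  have hself : star (CFC.abs v)⁻¹ʳ = (CFC.abs v)⁻¹ʳ := by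
    rw [← Ring.inverse_star, (CFC.abs_nonneg v).isSelfAdjoint.star_eq]
  refine (hv.mul habs.ringInverse).mem_unitary_iff_star_mul_self.2 ?_
  calc star (v * (CFC.abs v)⁻¹ʳ) * (v * (CFC.abs v)⁻¹ʳ)
      = (CFC.abs v)⁻¹ʳ * (star v * v) * (CFC.abs v)⁻¹ʳ := by simp only [star_mul, hself, mul_assoc]
    _ = (CFC.abs v)⁻¹ʳ * CFC.abs v * (CFC.abs v * (CFC.abs v)⁻¹ʳ) := by
      simp only [← CFC.abs_mul_abs, mul_assoc]
    _ = 1 := by rw [Ring.inverse_mul_cancel _ habs, Ring.mul_inverse_cancel _ habs, one_mul]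

theorem semiconjBy_polarUnitary {v p q : A} (hv : IsUnit v) (hp : IsSelfAdjoint p)
    (hq : IsSelfAdjoint q) (h : SemiconjBy v p q) : SemiconjBy (polarUnitary v) p q := by
  have hstar : SemiconjBy (star v) q p := by
    simpa only [SemiconjBy, star_mul, hp.star_eq, hq.star_eq] using congrArg star h.eq.symm
  have habs : Commute (CFC.abs v) p := Commute.cfcₙ_nnreal (hstar.mul_left h) NNReal.sqrt
  obtain ⟨u, hu⟩ := isUnit_abs hv
  rw [← hu] at habs
  rw [polarUnitary, ← hu, Ring.inverse_unit]
  exact h.mul_left habs.units_inv_left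

theorem contDiffOn_polarUnitary [CompleteSpace A] [ContinuousStar A] [StarModule ℝ A] {E : Type*}
    [NormedAddCommGroup E] [NormedSpace ℝ E] {k : WithTop ℕ∞} (hk : k ≠ 0) {s : Set E} {v : E → A}
    (hv : ContDiffOn ℝ k v s) (hunit : ∀ x ∈ s, IsUnit (v x)) :
    ContDiffOn ℝ k (fun x => polarUnitary (v x)) s := by
  have hstar : ContDiffOn ℝ k (fun x => star (v x)) s :=
    (starL' ℝ : A ≃L[ℝ] A).contDiff.comp_contDiffOn hv
  have habs : ContDiffOn ℝ k (fun x => CFC.abs (v x)) s :=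
    (contDiffOn_sqrt hk).comp (hstar.mul hv) fun x hx =>
      CFC.isUnit_sqrt_iff_isStrictlyPositive.1 (isUnit_abs (hunit x hx))
  refine hv.mul fun x hx => ?_
  obtain ⟨u, hu⟩ := isUnit_abs (hunit x hx)
  have hinv : ContDiffAt ℝ k Ring.inverse (CFC.abs (v x)) := hu ▸ contDiffAt_ringInverse ℝ u
  exact hinv.comp_contDiffWithinAt x (habs x hx)

theorem polarUnitary_cfc {f : ℝ → ℝ} {a : A} (ha : IsSelfAdjoint a)
    (hf : ContinuousOn f (spectrum ℝ a)) (hf0 : ∀ t ∈ spectrum ℝ a, f t ≠ 0) :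
    polarUnitary (cfc f a) = cfc (fun t => f t * |f t|⁻¹) a := by
  have habs0 : ∀ t ∈ spectrum ℝ a, |f t| ≠ 0 := fun t ht => abs_ne_zero.2 (hf0 t ht)
  have habs : CFC.abs (cfc f a) = cfc (fun t => |f t|) a := by
    rw [CFC.abs_eq_cfc_norm (cfc f a)]
    exact (cfc_comp' (fun t => ‖t‖) f a continuous_norm.continuousOn hf ha).symm
  rw [polarUnitary, habs, ← cfc_inv _ a habs0 hf.abs ha]
  exact (cfc_mul f _ a hf (hf.abs.inv₀ habs0)).symm

end PolarUnitary

section SpectralProjection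

variable {A : Type*} [NormedRing A] [StarRing A] [NormedAlgebra ℝ A]
  [IsometricContinuousFunctionalCalculus ℝ A IsSelfAdjoint]

/-- The spectral projection of a self-adjoint element `a` onto the part `I` of the line. The
continuous functional calculus gives `0` unless the indicator of `I` is continuous on the spectrum,
i.e. unless `I` meets the spectrum in a clopen set. -/
noncomputable def spectralProjection (I : Set ℝ) (a : A) : A := cfc (I.indicator 1) a

theorem isSelfAdjoint_spectralProjection (I : Set ℝ) (a : A) :
    IsSelfAdjoint (spectralProjection I a) :=
  cfc_predicate _ _

theorem commute_spectralProjection (I : Set ℝ) {a : A} (ha : IsSelfAdjoint a) :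
    Commute (spectralProjection I a) a := by
  simpa only [spectralProjection, cfc_id ℝ a] using cfc_commute_cfc (I.indicator 1) id a

theorem norm_mul_spectralProjection_le {I : Set ℝ} {a : A} (ha : IsSelfAdjoint a)
    (hcont : ContinuousOn (I.indicator (1 : ℝ → ℝ)) (spectrum ℝ a)) {c δ : ℝ} (hδ : 0 ≤ δ)
    (hI : I ⊆ closedBall c δ) : ‖(a - algebraMap ℝ A c) * spectralProjection I a‖ ≤ δ := by
  have hcfc : (a - algebraMap ℝ A c) * spectralProjection I a =
      cfc (fun t => (t - c) * I.indicator 1 t) a := by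
    rw [cfc_mul _ _ a (by fun_prop) hcont, cfc_sub .., cfc_id' .., cfc_const .., spectralProjection]
  rw [hcfc]
  refine norm_cfc_le hδ fun t _ => ?_
  by_cases ht : t ∈ I
  · simpa [ht, Real.dist_eq] using hI ht
  · simpa [ht] using hδ

theorem isUnit_sub_algebraMap {R B : Type*} [CommRing R] [Ring B] [Algebra R B] {b : B} {r : R}
    (hr : r ∉ spectrum R b) : IsUnit (b - algebraMap R B r) :=
  neg_sub (algebraMap R B r) b ▸ (spectrum.notMem_iff.1 hr).neg

theorem continuousOn_indicator_one_iUnion {X : Type*} [TopologicalSpace X] {ι : Type*}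
    {I : ι → Set X} (hI : ∀ i, IsOpen (I i)) (hdisj : Pairwise (Function.onFun Disjoint I))
    (i : ι) : ContinuousOn ((I i).indicator (1 : X → ℝ)) (⋃ j, I j) := by
  intro x hx
  obtain ⟨j, hj⟩ := Set.mem_iUnion.1 hx
  refine ContinuousAt.continuousWithinAt ?_
  rcases eq_or_ne i j with rfl | hij
  · exact continuousAt_const.congr <|
      Filter.eventuallyEq_of_mem ((hI i).mem_nhds hj) fun y hy => (Set.indicator_of_mem hy _).symm
  · exact continuousAt_const.congr <|
      Filter.eventuallyEq_of_mem ((hI j).mem_nhds hj) fun y hy =>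
        (Set.indicator_of_notMem ((hdisj hij).notMem_of_mem_right hy) _).symm

theorem completeOrthogonalIdempotents_spectralProjection {ι : Type*} [Fintype ι]
    {I : ι → Set ℝ} {a : A} (hI : ∀ i, IsOpen (I i))
    (hdisj : Pairwise (Function.onFun Disjoint I)) (ha : IsSelfAdjoint a)
    (hspec : spectrum ℝ a ⊆ ⋃ i, I i) :
    CompleteOrthogonalIdempotents fun i => spectralProjection (I i) a := by
  have hcont i := (continuousOn_indicator_one_iUnion hI hdisj i).mono hspec
  refine CompleteOrthogonalIdempotents.iff_ortho_complete.2 ⟨fun i j hij => ?_, ?_⟩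
  · have hmul : (fun t => (I i).indicator (1 : ℝ → ℝ) t * (I j).indicator 1 t) = 0 := by
      ext t
      rw [← Set.inter_indicator_mul, (hdisj hij).inter_eq, Set.indicator_empty, Pi.zero_apply]
    simp only [spectralProjection]
    rw [← cfc_mul _ _ a (hcont i) (hcont j), hmul, cfc_zero]
  · have hsum : (spectrum ℝ a).EqOn (∑ i, (I i).indicator (1 : ℝ → ℝ)) 1 := fun t ht => by
      obtain ⟨j, hj⟩ := Set.mem_iUnion.1 (hspec ht)
      have hoff i (_ : i ∈ Finset.univ) (hij : i ≠ j) : (I i).indicator (1 : ℝ → ℝ) t = 0 :=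
        Set.indicator_of_notMem ((hdisj hij).notMem_of_mem_right hj) _
      rw [Finset.sum_apply, Finset.sum_eq_single j hoff (by simp), Set.indicator_of_mem hj]
    simp only [spectralProjection]
    rw [← cfc_sum_univ _ a hcont, cfc_congr hsum, cfc_one ℝ a]

variable [PartialOrder A] [StarOrderedRing A] [NonnegSpectrumClass ℝ A]

theorem indicator_Ioo_one_eq {α β t : ℝ} (hαβ : α ≤ β) (hα : t ≠ α) (hβ : t ≠ β) :
    (Set.Ioo α β).indicator 1 t =
      2⁻¹ * (1 - (t - α) * (t - β) * |(t - α) * (t - β)|⁻¹) := by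
  have hne : (t - α) * (t - β) ≠ 0 := mul_ne_zero (sub_ne_zero.2 hα) (sub_ne_zero.2 hβ)
  by_cases ht : t ∈ Set.Ioo α β
  · have hneg : (t - α) * (t - β) < 0 :=
      mul_neg_of_pos_of_neg (sub_pos.2 ht.1) (sub_neg.2 ht.2)
    rw [Set.indicator_of_mem ht, abs_of_neg hneg, inv_neg, mul_neg, mul_inv_cancel₀ hne,
      Pi.one_apply]
    norm_num
  · have hpos : 0 ≤ (t - α) * (t - β) := by
      rcases not_and_or.1 ht with h | h
      · exact mul_nonneg_of_nonpos_of_nonpos (by linarith) (by linarith)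
      · exact mul_nonneg (by linarith) (by linarith)
    rw [Set.indicator_of_notMem ht, abs_of_nonneg hpos, mul_inv_cancel₀ hne, sub_self, mul_zero]

theorem spectralProjection_Ioo_eq {α β : ℝ} (hαβ : α ≤ β) {a : A} (ha : IsSelfAdjoint a)
    (hα : α ∉ spectrum ℝ a) (hβ : β ∉ spectrum ℝ a) :
    spectralProjection (Set.Ioo α β) a = (2⁻¹ : ℝ) •
      (1 - polarUnitary ((a - algebraMap ℝ A α) * (a - algebraMap ℝ A β))) := by
  let f : ℝ → ℝ := fun t => (t - α) * (t - β)
  have hα' : ∀ t ∈ spectrum ℝ a, t ≠ α := fun t ht => ne_of_mem_of_not_mem ht hα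
  have hβ' : ∀ t ∈ spectrum ℝ a, t ≠ β := fun t ht => ne_of_mem_of_not_mem ht hβ
  have hf : ContinuousOn f (spectrum ℝ a) := by fun_prop
  have hf0 : ∀ t ∈ spectrum ℝ a, f t ≠ 0 := fun t ht =>
    mul_ne_zero (sub_ne_zero.2 (hα' t ht)) (sub_ne_zero.2 (hβ' t ht))
  have hsign : ContinuousOn (fun t => f t * |f t|⁻¹) (spectrum ℝ a) :=
    hf.mul (hf.abs.inv₀ fun t ht => abs_ne_zero.2 (hf0 t ht))
  have hdiff : ContinuousOn (fun t => 1 - f t * |f t|⁻¹) (spectrum ℝ a) :=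
    continuousOn_const.sub hsign
  have hquad : (a - algebraMap ℝ A α) * (a - algebraMap ℝ A β) = cfc f a := by
    rw [cfc_mul .., cfc_sub .., cfc_sub .., cfc_id' .., cfc_const .., cfc_const ..]
  rw [hquad, polarUnitary_cfc ha hf hf0, ← cfc_const_one ℝ a,
    ← cfc_sub _ _ a continuousOn_const hsign, ← cfc_const_mul _ _ a hdiff]
  exact cfc_congr fun t ht => indicator_Ioo_one_eq hαβ (hα' t ht) (hβ' t ht)

theorem contDiffOn_spectralProjection_Ioo [CompleteSpace A] [ContinuousStar A] [StarModule ℝ A]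
    {E : Type*} [NormedAddCommGroup E] [NormedSpace ℝ E] {k : WithTop ℕ∞} (hk : k ≠ 0) {α β : ℝ}
    (hαβ : α ≤ β) {s : Set E} {h : E → A} (hh : ContDiffOn ℝ k h s)
    (hsa : ∀ x ∈ s, IsSelfAdjoint (h x)) (hα : ∀ x ∈ s, α ∉ spectrum ℝ (h x))
    (hβ : ∀ x ∈ s, β ∉ spectrum ℝ (h x)) :
    ContDiffOn ℝ k (fun x => spectralProjection (Set.Ioo α β) (h x)) s := by
  have hpolar := contDiffOn_polarUnitary hk
    ((hh.sub contDiffOn_const).mul (hh.sub contDiffOn_const)) fun x hx =>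
    (isUnit_sub_algebraMap (hα x hx)).mul (isUnit_sub_algebraMap (hβ x hx))
  exact ((contDiffOn_const.sub hpolar).const_smul _).congr fun x hx =>
    spectralProjection_Ioo_eq hαβ (hsa x hx) (hα x hx) (hβ x hx)

end SpectralProjection

section Transport

section Intertwiner

variable {R ι : Type*} [Semiring R] [Fintype ι]

/-- The transition element `∑ i, p i * q i` between two families of idempotents. It carries `q i`
to `p i`, and is invertible when the families are close. -/
def intertwiner (p q : ι → R) : R := ∑ i, p i * q i

theorem semiconjBy_intertwiner {p q : ι → R} (hp : OrthogonalIdempotents p)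
    (hq : OrthogonalIdempotents q) (i : ι) : SemiconjBy (intertwiner p q) (q i) (p i) := by
  classical
  simp only [SemiconjBy, intertwiner, Finset.sum_mul, Finset.mul_sum, mul_assoc, hq.mul_eq]
  simp only [← mul_assoc, hp.mul_eq]
  simp

theorem intertwiner_self {p : ι → R} (hp : CompleteOrthogonalIdempotents p) :
    intertwiner p p = 1 := by
  rw [intertwiner, ← hp.complete]
  exact Finset.sum_congr rfl fun i _ => hp.idem i

end Intertwiner

variable {A : Type*} [NormedRing A] {ι : Type*} [Fintype ι]

theorem exists_forall_dist_lt_isUnit_intertwiner [CompleteSpace A] {X : Type*}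
    [PseudoMetricSpace X] {K : Set X} (hK : IsCompact K) {p : ι → X → A}
    (hp : ∀ i, ContinuousOn (p i) K)
    (hidem : ∀ x ∈ K, CompleteOrthogonalIdempotents (p · x)) :
    ∃ δ > 0, ∀ y ∈ K, ∀ z ∈ K, dist y z < δ → IsUnit (intertwiner (p · y) (p · z)) := by
  have hcont : ContinuousOn (fun w : X × X => intertwiner (p · w.1) (p · w.2)) (K ×ˢ K) :=
    continuousOn_finsetSum _ fun i _ =>
      ((hp i).comp continuousOn_fst fun w hw => hw.1).mul
        ((hp i).comp continuousOn_snd fun w hw => hw.2)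
  obtain ⟨δ, hδ, hclose⟩ := Metric.uniformContinuousOn_iff.1
    ((hK.prod hK).uniformContinuousOn_of_continuous hcont) 1 one_pos
  refine ⟨δ, hδ, fun y hy z hz hyz => ?_⟩
  have hnear := hclose (z, z) ⟨hz, hz⟩ (y, z) ⟨hy, hz⟩
    (by simpa [Prod.dist_eq, hδ, dist_comm z y] using hyz)
  simp only [intertwiner_self (hidem z hz), dist_eq_norm] at hnear
  simpa using isUnit_one_sub_of_norm_lt_one hnear

variable [NormedAlgebra ℝ A] {E : Type*} [NormedAddCommGroup E] [NormedSpace ℝ E]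
  {k : WithTop ℕ∞} {K : Set E}

theorem exists_contDiffOn_semiconjBy_chain {N : ℕ} {q : ℕ → ι → E → A}
    (hq : ∀ j ≤ N, ∀ i, ContDiffOn ℝ k (q j i) K)
    (hidem : ∀ j ≤ N, ∀ x ∈ K, OrthogonalIdempotents (q j · x))
    (hunit : ∀ j < N, ∀ x ∈ K, IsUnit (intertwiner (q (j + 1) · x) (q j · x))) :
    ∃ V : E → A, ContDiffOn ℝ k V K ∧
      ∀ x ∈ K, IsUnit (V x) ∧ ∀ i, SemiconjBy (V x) (q 0 i x) (q N i x) := by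
  induction N with
  | zero => exact ⟨1, contDiffOn_const, fun x _ => ⟨isUnit_one, fun i => .one_left _⟩⟩
  | succ N ih =>
    obtain ⟨V, hV, hVq⟩ := ih (fun j hj => hq j (by lia)) (fun j hj => hidem j (by lia))
      fun j hj => hunit j (by lia)
    refine ⟨fun x => intertwiner (q (N + 1) · x) (q N · x) * V x, ?_, fun x hx => ?_⟩
    · exact (ContDiffOn.sum fun i _ => (hq _ le_rfl i).mul (hq N N.le_succ i)).mul hV
    · exact ⟨(hunit N N.lt_succ_self x hx).mul (hVq x hx).1, fun i =>
        (semiconjBy_intertwiner (hidem _ le_rfl x hx) (hidem N N.le_succ x hx) i).mul_left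
          ((hVq x hx).2 i)⟩

theorem exists_contDiffOn_semiconjBy_of_starConvex [CompleteSpace A] (hK : IsCompact K) {x₀ : E}
    (hstar : StarConvex ℝ x₀ K) {p : ι → E → A} (hp : ∀ i, ContDiffOn ℝ k (p i) K)
    (hidem : ∀ x ∈ K, CompleteOrthogonalIdempotents (p · x)) :
    ∃ V : E → A, ContDiffOn ℝ k V K ∧
      ∀ x ∈ K, IsUnit (V x) ∧ ∀ i, SemiconjBy (V x) (p i x₀) (p i x) := by
  obtain ⟨δ, hδ, hunit⟩ :=
    exists_forall_dist_lt_isUnit_intertwiner hK (fun i => (hp i).continuousOn) hidem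
  obtain ⟨C, hC, hKC⟩ := hK.isBounded.subset_closedBall_lt 0 x₀
  obtain ⟨N, hN⟩ := exists_nat_gt (C / δ)
  have hN0 : (0 : ℝ) < N := (div_pos hC hδ).trans hN
  let γ (j : ℕ) (x : E) : E := AffineMap.lineMap x₀ x (j / N : ℝ)
  have hγ j : ContDiff ℝ k (γ j) := by
    simp only [γ, AffineMap.lineMap_apply_module']
    fun_prop
  have hγK : ∀ j ≤ N, Set.MapsTo (γ j) K K := fun j hj x hx => by
    simp only [γ, AffineMap.lineMap_apply_module', add_comm _ x₀]
    exact hstar.add_smul_sub_mem hx (by positivity) (div_le_one_of_le₀ (by gcongr) hN0.le)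
  have hγδ j : ∀ x ∈ K, dist (γ (j + 1) x) (γ j x) < δ := fun x hx => by
    calc dist (γ (j + 1) x) (γ j x) = dist x₀ x / N := by
          rw [dist_lineMap_lineMap, Real.dist_eq, Nat.cast_succ, ← sub_div, add_sub_cancel_left,
            abs_of_pos (by positivity), one_div_mul_eq_div]
      _ ≤ C / N := by
          gcongr
          exact dist_comm x x₀ ▸ hKC hx
      _ < δ := (div_lt_comm₀ hδ hN0).1 hN
  obtain ⟨V, hV, hVp⟩ := exists_contDiffOn_semiconjBy_chain (N := N) (q := fun j i => p i ∘ γ j)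
    (fun j hj i => (hp i).comp (hγ j).contDiffOn (hγK j hj))
    (fun j hj x hx => (hidem _ (hγK j hj hx)).toOrthogonalIdempotents)
    fun j hj x hx => hunit _ (hγK _ hj hx) _ (hγK j hj.le hx) (hγδ j x hx)
  exact ⟨V, hV, fun x hx => by simpa [γ, hN0.ne'] using hVp x hx⟩

end Transport

theorem disjoint_frontier_iUnion {X : Type*} [TopologicalSpace X] {ι : Type*} {I : ι → Set X}
    (hI : ∀ i, IsOpen (I i)) (hdisj : Pairwise (Function.onFun Disjoint I)) (i : ι) :
    Disjoint (frontier (I i)) (⋃ j, I j) := by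
  refine Set.disjoint_iUnion_right.2 fun j => ?_
  rcases eq_or_ne i j with rfl | hij
  · exact (Set.disjoint_iff_inter_eq_empty.2 (hI i).inter_frontier_eq).symm
  · exact ((hdisj hij).closure_left (hI j)).mono_left frontier_subset_closure

section SmoothTransport

variable {A : Type*} [NormedRing A] [CompleteSpace A] [StarRing A] [ContinuousStar A]
  [NormedAlgebra ℝ A] [StarModule ℝ A] [PartialOrder A] [StarOrderedRing A]
  [NonnegSpectrumClass ℝ A] [IsometricContinuousFunctionalCalculus ℝ A IsSelfAdjoint]
  {E : Type*} [NormedAddCommGroup E] [NormedSpace ℝ E] {k : WithTop ℕ∞} {K : Set E}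

theorem exists_contDiffOn_unitary_semiconjBy_spectralProjection (hk : k ≠ 0) (hK : IsCompact K)
    {x₀ : E} (hstar : StarConvex ℝ x₀ K) {h : E → A} (hh : ContDiffOn ℝ k h K)
    (hsa : ∀ x ∈ K, IsSelfAdjoint (h x)) {ι : Type*} [Finite ι] {α β : ι → ℝ}
    (hαβ : ∀ i, α i < β i)
    (hdisj : Pairwise (Function.onFun Disjoint fun i => Set.Ioo (α i) (β i)))
    (hspec : ∀ x ∈ K, spectrum ℝ (h x) ⊆ ⋃ i, Set.Ioo (α i) (β i)) :
    ∃ U : E → A, ContDiffOn ℝ k U K ∧ ∀ x ∈ K, U x ∈ unitary A ∧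
      ∀ i, SemiconjBy (U x) (spectralProjection (Set.Ioo (α i) (β i)) (h x₀))
        (spectralProjection (Set.Ioo (α i) (β i)) (h x)) := by
  cases nonempty_fintype ι
  have hopen i : IsOpen (Set.Ioo (α i) (β i)) := isOpen_Ioo
  have hfrontier : ∀ x ∈ K, ∀ i, ∀ t ∈ ({α i, β i} : Set ℝ), t ∉ spectrum ℝ (h x) :=
    fun x hx i t ht hts => (disjoint_frontier_iUnion hopen hdisj i).notMem_of_mem_left
      (frontier_Ioo (hαβ i) ▸ ht) (hspec x hx hts)
  have hp i : ContDiffOn ℝ k (fun x => spectralProjection (Set.Ioo (α i) (β i)) (h x)) K :=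
    contDiffOn_spectralProjection_Ioo hk (hαβ i).le hh hsa
      (fun x hx => hfrontier x hx i _ (by simp)) fun x hx => hfrontier x hx i _ (by simp)
  obtain ⟨V, hV, hVp⟩ := exists_contDiffOn_semiconjBy_of_starConvex hK hstar hp fun x hx =>
    completeOrthogonalIdempotents_spectralProjection hopen hdisj (hsa x hx) (hspec x hx)
  exact ⟨fun x => polarUnitary (V x), contDiffOn_polarUnitary hk hV fun x hx => (hVp x hx).1,
    fun x hx => ⟨polarUnitary_mem_unitary (hVp x hx).1, fun i =>
      semiconjBy_polarUnitary (hVp x hx).1 (isSelfAdjoint_spectralProjection _ _)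
        (isSelfAdjoint_spectralProjection _ _) ((hVp x hx).2 i)⟩⟩

end SmoothTransport

section Clusters

theorem exists_sigma_fin_equiv {α β ι : Type*} [Fintype α] [Fintype ι] {I : ι → Set β}
    (hdisj : Pairwise (Function.onFun Disjoint I)) {d : α → β} {m : ι → ℕ}
    (hm : ∀ i, Nat.card {a // d a ∈ I i} = m i) (hsum : ∑ i, m i = Fintype.card α) :
    ∃ e : (Σ i, Fin (m i)) ≃ α, ∀ s, d (e s) ∈ I s.1 := by
  let f (i : ι) : Fin (m i) ≃ {a // d a ∈ I i} := (Finite.equivFinOfCardEq (hm i)).symm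
  let e (s : Σ i, Fin (m i)) : α := f s.1 s.2
  have hinj : e.Injective := by
    rintro ⟨i, a⟩ ⟨j, b⟩ (hab : (f i a : α) = f j b)
    obtain rfl : i = j := by
      by_contra hij
      exact (hdisj hij).notMem_of_mem_left (f i a).2 (hab ▸ (f j b).2)
    rw [(f i).injective (Subtype.ext hab)]
  have hbij : e.Bijective := (Fintype.bijective_iff_injective_and_card e).2
    ⟨hinj, by simpa using hsum⟩
  exact ⟨Equiv.ofBijective e hbij, fun s => (f s.1 s.2).2⟩

end Clusters

theorem semiconjBy_star_of_mem_unitary {R : Type*} [Monoid R] [StarMul R] {w p q : R}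
    (hw : w ∈ unitary R) (h : SemiconjBy w q p) : SemiconjBy (star w) p q :=
  SemiconjBy.units_inv_symm_left (a := Unitary.toUnits ⟨w, hw⟩) h

section Matrices

open scoped Matrix.Norms.L2Operator

variable {𝕜 : Type*} [RCLike 𝕜] {m n : Type*} [Fintype m] [DecidableEq m] [Fintype n]
  [DecidableEq n]

/-- The scoped norm instances only make `Matrix n n 𝕜` a normed algebra over `𝕜`; differentiation
along real parameters needs the scalars `ℝ`. -/
noncomputable local instance matrixRealNormedAlgebra : NormedAlgebra ℝ (Matrix n n 𝕜) where
  norm_smul_le t M := by rw [← algebraMap_smul 𝕜 t M, norm_smul, norm_algebraMap']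

section Norm

omit [DecidableEq m] in
theorem l2_opNorm_one_submatrix_le_one {f : m → n} (hf : f.Injective) :
    ‖(1 : Matrix n n 𝕜).submatrix f id‖ ≤ 1 := by
  classical
  let F := (1 : Matrix n n 𝕜).submatrix f id
  have hF : F * Fᴴ = diagonal 1 := by
    simp [F, conjTranspose_submatrix, ← submatrix_mul _ _ f id f Function.bijective_id,
      submatrix_one _ hf, diagonal_one']
  have hsq : ‖F‖ * ‖F‖ ≤ 1 := by
    calc ‖F‖ * ‖F‖ = ‖F * Fᴴ‖ := by
          rw [← l2_opNorm_conjTranspose F, ← l2_opNorm_conjTranspose_mul_self,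
            conjTranspose_conjTranspose]
      _ ≤ 1 := by
          rw [hF, l2_opNorm_diagonal]
          exact (pi_norm_le_iff_of_nonneg zero_le_one).2 fun i => by simp
  exact (le_abs_self _).trans (abs_le_one_iff_mul_self_le_one.2 hsq)

theorem l2_opNorm_submatrix_le (M : Matrix n n 𝕜) {f g : m → n} (hf : f.Injective)
    (hg : g.Injective) : ‖M.submatrix f g‖ ≤ ‖M‖ := by
  let F (f : m → n) := (1 : Matrix n n 𝕜).submatrix f id
  have hM : M.submatrix f g = F f * M * (F g)ᴴ := by
    calc M.submatrix f g = (1 * M * 1).submatrix f g := by rw [one_mul, mul_one]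
      _ = F f * M * (F g)ᴴ := by
        rw [submatrix_mul _ _ f id g Function.bijective_id,
          submatrix_mul _ _ f id id Function.bijective_id, submatrix_id_id,
          conjTranspose_submatrix, conjTranspose_one]
  calc ‖M.submatrix f g‖ ≤ ‖F f‖ * ‖M‖ * ‖F g‖ := by
        rw [hM, ← l2_opNorm_conjTranspose (F g)]
        exact (l2_opNorm_mul _ _).trans (by gcongr; exact l2_opNorm_mul _ _)
    _ ≤ 1 * ‖M‖ * 1 := by
        gcongr
        exacts [l2_opNorm_one_submatrix_le_one hf, l2_opNorm_one_submatrix_le_one hg]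
    _ = ‖M‖ := by rw [one_mul, mul_one]

theorem norm_apply_le_l2_opNorm (M : Matrix n n 𝕜) (a b : n) : ‖M a b‖ ≤ ‖M‖ := by
  have hM : M.submatrix (fun _ : Unit => a) (fun _ => b) = diagonal fun _ => M a b := by
    ext i j
    simp
  have h := l2_opNorm_submatrix_le M (Function.injective_of_subsingleton fun _ : Unit => a)
    (Function.injective_of_subsingleton fun _ => b)
  rwa [hM, l2_opNorm_diagonal, pi_norm_const] at h

theorem norm_trace_le_card_mul_l2_opNorm (M : Matrix n n 𝕜) :
    ‖M.trace‖ ≤ Fintype.card n * ‖M‖ := by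
  calc ‖M.trace‖ ≤ ∑ a, ‖M a a‖ := norm_sum_le _ _
    _ ≤ ∑ _ : n, ‖M‖ := Finset.sum_le_sum fun a _ => norm_apply_le_l2_opNorm M a a
    _ = Fintype.card n * ‖M‖ := by rw [Finset.sum_const, Finset.card_univ, nsmul_eq_mul]

variable {E : Type*} [NormedAddCommGroup E] [NormedSpace ℝ E]

theorem contDiffOn_matrix_iff {k : WithTop ℕ∞} {M : E → Matrix n n 𝕜} {s : Set E} :
    ContDiffOn ℝ k M s ↔ ∀ a b, ContDiffOn ℝ k (fun x => M x a b) s := by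
  let Φ : Matrix n n 𝕜 ≃L[ℝ] (n → n → 𝕜) :=
    (Matrix.ofLinearEquiv ℝ).symm.toContinuousLinearEquiv
  rw [← Φ.comp_contDiffOn_iff, contDiffOn_pi]
  exact forall_congr' fun a => contDiffOn_pi

end Norm

section MeanEigenvalue

/-- The mean of the eigenvalues of a Hermitian matrix, as its normalised trace. -/
noncomputable def meanEigenvalue (B : Matrix n n 𝕜) : ℝ := RCLike.re B.trace / Fintype.card n

variable [Nonempty n]

theorem abs_meanEigenvalue_sub_le {B : Matrix n n 𝕜} {c δ : ℝ}
    (hB : ‖B - algebraMap ℝ _ c‖ ≤ δ) : |meanEigenvalue B - c| ≤ δ := by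
  have hcard : (0 : ℝ) < Fintype.card n := by exact_mod_cast Fintype.card_pos
  have hmean : meanEigenvalue B - c = RCLike.re (B - algebraMap ℝ _ c).trace / Fintype.card n := by
    rw [meanEigenvalue, Algebra.algebraMap_eq_smul_one, trace_sub, trace_smul, trace_one,
      map_sub, RCLike.smul_re, RCLike.natCast_re]
    field_simp
  rw [hmean, abs_div, abs_of_pos hcard, div_le_iff₀' hcard]
  calc |RCLike.re (B - algebraMap ℝ _ c).trace|
      ≤ ‖(B - algebraMap ℝ _ c).trace‖ := RCLike.abs_re_le_norm _
    _ ≤ Fintype.card n * ‖B - algebraMap ℝ _ c‖ := norm_trace_le_card_mul_l2_opNorm _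
    _ ≤ Fintype.card n * δ := by gcongr

theorem norm_sub_meanEigenvalue_le {B : Matrix n n 𝕜} {c δ : ℝ}
    (hB : ‖B - algebraMap ℝ _ c‖ ≤ δ) :
    ‖B - algebraMap ℝ _ (meanEigenvalue B)‖ ≤ 2 * δ := by
  have hscalar : ‖algebraMap ℝ (Matrix n n 𝕜) (meanEigenvalue B - c)‖ ≤ δ := by
    rw [algebraMap_eq_diagonal, l2_opNorm_diagonal, Pi.algebraMap_def, pi_norm_const,
      norm_algebraMap', Real.norm_eq_abs]
    exact abs_meanEigenvalue_sub_le hB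
  calc ‖B - algebraMap ℝ _ (meanEigenvalue B)‖
      = ‖(B - algebraMap ℝ _ c) - algebraMap ℝ _ (meanEigenvalue B - c)‖ := by
        rw [map_sub, sub_sub_sub_cancel_right]
    _ ≤ δ + δ := norm_sub_le_of_le hB hscalar
    _ = 2 * δ := (two_mul δ).symm

theorem trace_sub_meanEigenvalue {B : Matrix n n 𝕜} (hB : B.IsHermitian) :
    (B - algebraMap ℝ _ (meanEigenvalue B)).trace = 0 := by
  have hreal : (RCLike.re B.trace : 𝕜) = B.trace := RCLike.conj_eq_iff_re.1 (by
    rw [starRingEnd_apply, ← trace_conjTranspose, hB.eq])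
  rw [trace_sub, Algebra.algebraMap_eq_smul_one, trace_smul, trace_one, sub_eq_zero]
  nth_rw 1 [← hreal]
  rw [meanEigenvalue, RCLike.real_smul_eq_coe_mul]
  push_cast
  field_simp

end MeanEigenvalue

section Blocks

theorem semiconjBy_eigenvectorUnitary_spectralProjection {M : Matrix n n 𝕜} (hM : M.IsHermitian)
    (I : Set ℝ) :
    SemiconjBy (hM.eigenvectorUnitary : Matrix n n 𝕜)
      (diagonal fun a => (I.indicator 1 (hM.eigenvalues a) : 𝕜)) (spectralProjection I M) := by
  have hdiag : (RCLike.ofReal ∘ I.indicator 1 ∘ hM.eigenvalues : n → 𝕜) =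
      fun a => I.indicator 1 (hM.eigenvalues a) := by
    ext a
    by_cases ha : hM.eigenvalues a ∈ I <;> simp [ha]
  rw [spectralProjection, hM.cfc_eq, IsHermitian.cfc, hdiag, Unitary.conjStarAlgAut_apply,
    SemiconjBy, mul_assoc, Unitary.coe_star_mul_self, mul_one]

theorem apply_eq_zero_of_commute_diagonal {R : Type*} [CommRing R] [NoZeroDivisors R] {d : n → R}
    {G : Matrix n n R} (hG : Commute G (diagonal d)) {a b : n} (hab : d a ≠ d b) : G a b = 0 := by
  have h := congrFun₂ hG.eq a b
  rw [diagonal_mul, mul_diagonal, mul_comm, ← sub_eq_zero, ← sub_mul] at h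
  exact (mul_eq_zero.1 h).resolve_left (sub_ne_zero.2 hab.symm)

theorem norm_submatrix_sub_algebraMap_le {f : m → n} (hf : f.Injective) {d : n → 𝕜}
    (hd : ∀ i, d (f i) = 1) (G : Matrix n n 𝕜) (c : ℝ) :
    ‖G.submatrix f f - algebraMap ℝ _ c‖ ≤ ‖(G - algebraMap ℝ _ c) * diagonal d‖ := by
  have hblock : G.submatrix f f - algebraMap ℝ _ c =
      ((G - algebraMap ℝ _ c) * diagonal d).submatrix f f := by
    ext i j
    simp [mul_diagonal, hd, algebraMap_matrix_apply, hf.eq_iff]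
  exact hblock ▸ l2_opNorm_submatrix_le _ hf hf

theorem norm_star_mul_mul_sub_mul {A : Type*} [NormedRing A] [StarRing A] [CStarRing A]
    [Algebra ℝ A] {w p q : A} (hw : w ∈ unitary A) (hwp : SemiconjBy w q p) (h : A) (c : ℝ) :
    ‖(star w * h * w - algebraMap ℝ A c) * q‖ = ‖(h - algebraMap ℝ A c) * p‖ := by
  have hconj : (star w * h * w - algebraMap ℝ A c) * q =
      star w * ((h - algebraMap ℝ A c) * p) * w := by
    have hscalar : algebraMap ℝ A c = star w * algebraMap ℝ A c * w := by
      rw [mul_assoc, Algebra.commutes c w, ← mul_assoc, Unitary.star_mul_self_of_mem hw, one_mul]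
    nth_rw 1 [hscalar]
    rw [← sub_mul, ← mul_sub, mul_assoc, hwp.eq, ← mul_assoc, mul_assoc (star w)]
  rw [hconj, CStarRing.norm_mul_mem_unitary _ hw,
    CStarRing.norm_mem_unitary_mul _ (Unitary.star_mem hw)]

end Blocks

section BlockProjection

variable {R : Type*} {ι : Type*} [DecidableEq ι] {κ : ι → Type*}

/-- The diagonal projection onto the `i`-th block of coordinates, for coordinates grouped into
blocks by `e`. -/
def blockProjection (R : Type*) [Zero R] [One R] (e : (Σ i, κ i) ≃ n) (i : ι) : Matrix n n R :=
  diagonal fun a => if (e.symm a).1 = i then 1 else 0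

omit [Fintype n] in
theorem blockProjection_eq_diagonal_indicator [Zero R] [One R] {e : (Σ i, κ i) ≃ n} {X : Type*}
    {I : ι → Set X} (hdisj : Pairwise (Function.onFun Disjoint I)) {d : n → X}
    (he : ∀ s, d (e s) ∈ I s.1) (i : ι) :
    blockProjection R e i = diagonal fun a => (I i).indicator 1 (d a) := by
  refine congrArg diagonal (funext fun a => ?_)
  obtain ⟨s, rfl⟩ := e.surjective a
  rw [e.symm_apply_apply]
  split_ifs with hs
  · rw [Set.indicator_of_mem (hs ▸ he s), Pi.one_apply]
  · rw [Set.indicator_of_notMem ((hdisj hs).notMem_of_mem_left (he s))]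

theorem submatrix_eq_blockDiagonal'_of_commute [CommRing R] [IsDomain R] (e : (Σ i, κ i) ≃ n)
    {G : Matrix n n R} (hG : ∀ i, Commute G (blockProjection R e i)) :
    G.submatrix e e = blockDiagonal' fun i => G.submatrix (e ⟨i, ·⟩) (e ⟨i, ·⟩) := by
  ext ⟨i, a⟩ ⟨j, b⟩
  rcases eq_or_ne i j with rfl | hij
  · rw [blockDiagonal'_apply_eq, submatrix_apply, submatrix_apply]
  · rw [blockDiagonal'_apply_ne _ _ _ hij, submatrix_apply]
    exact apply_eq_zero_of_commute_diagonal (hG i) (by simp [hij.symm])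

open scoped MatrixOrder in
theorem norm_submatrix_sub_algebraMap_le_of_semiconjBy [∀ i, Fintype (κ i)]
    [∀ i, DecidableEq (κ i)] {e : (Σ i, κ i) ≃ n} {I : ι → Set ℝ} {W h : Matrix n n 𝕜}
    (hh : h.IsHermitian) (hI : ∀ i, IsOpen (I i))
    (hdisj : Pairwise (Function.onFun Disjoint I))
    (hspec : spectrum ℝ h ⊆ ⋃ i, I i) (hW : W ∈ unitary (Matrix n n 𝕜))
    {i : ι} (hWI : SemiconjBy W (blockProjection 𝕜 e i) (spectralProjection (I i) h)) {c δ : ℝ}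
    (hδ : 0 ≤ δ) (hIc : I i ⊆ closedBall c δ) :
    ‖(star W * h * W).submatrix (e ⟨i, ·⟩) (e ⟨i, ·⟩) - algebraMap ℝ _ c‖ ≤ δ := by
  calc ‖(star W * h * W).submatrix (e ⟨i, ·⟩) (e ⟨i, ·⟩) - algebraMap ℝ _ c‖
      ≤ ‖(star W * h * W - algebraMap ℝ _ c) * blockProjection 𝕜 e i‖ :=
        norm_submatrix_sub_algebraMap_le (e.injective.comp sigma_mk_injective) (by simp) _ _
    _ = ‖(h - algebraMap ℝ _ c) * spectralProjection (I i) h‖ :=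
        norm_star_mul_mul_sub_mul hW hWI h c
    _ ≤ δ := norm_mul_spectralProjection_le hh
        ((continuousOn_indicator_one_iUnion hI hdisj i).mono hspec) hδ hIc

end BlockProjection

section SmoothBlocks

variable {E : Type*} [NormedAddCommGroup E] [NormedSpace ℝ E] {k : WithTop ℕ∞} {K : Set E} {x₀ : E}
  {H : E → Matrix n n 𝕜} {ι : Type*} [Fintype ι] [DecidableEq ι] {m : ι → ℕ} {α β : ι → ℝ}

open scoped MatrixOrder

theorem exists_contDiffOn_unitary_semiconjBy_blockProjection (hk : k ≠ 0) (hK : IsCompact K)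
    (hx₀ : x₀ ∈ K) (hstar : StarConvex ℝ x₀ K) (hH : ContDiffOn ℝ k H K)
    (hherm : ∀ x ∈ K, (H x).IsHermitian) (hsum : ∑ i, m i = Fintype.card n)
    (hαβ : ∀ i, α i < β i)
    (hdisj : Pairwise (Function.onFun Disjoint fun i => Set.Ioo (α i) (β i)))
    (hcluster : ∀ x (hx : x ∈ K) i,
      Nat.card {a // (hherm x hx).eigenvalues a ∈ Set.Ioo (α i) (β i)} = m i) :
    ∃ (W : E → Matrix n n 𝕜) (e : (Σ i, Fin (m i)) ≃ n), ContDiffOn ℝ k W K ∧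
      ∀ x ∈ K, W x ∈ unitary (Matrix n n 𝕜) ∧
        spectrum ℝ (H x) ⊆ ⋃ i, Set.Ioo (α i) (β i) ∧
        ∀ i, SemiconjBy (W x) (blockProjection 𝕜 e i)
          (spectralProjection (Set.Ioo (α i) (β i)) (H x)) := by
  have hlabel x (hx : x ∈ K) := exists_sigma_fin_equiv hdisj (hcluster x hx) hsum
  have hspec : ∀ x ∈ K, spectrum ℝ (H x) ⊆ ⋃ i, Set.Ioo (α i) (β i) := fun x hx => by
    obtain ⟨e, he⟩ := hlabel x hx
    rw [(hherm x hx).spectrum_real_eq_range_eigenvalues, ← e.surjective.range_comp]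
    exact Set.range_subset_iff.2 fun s => Set.mem_iUnion_of_mem s.1 (he s)
  obtain ⟨e, he⟩ := hlabel x₀ hx₀
  obtain ⟨U, hU, hUp⟩ := exists_contDiffOn_unitary_semiconjBy_spectralProjection hk hK hstar hH
    hherm hαβ hdisj hspec
  let V₀ := (hherm x₀ hx₀).eigenvectorUnitary
  have hV₀ i : SemiconjBy (V₀ : Matrix n n 𝕜) (blockProjection 𝕜 e i)
      (spectralProjection (Set.Ioo (α i) (β i)) (H x₀)) := by
    rw [blockProjection_eq_diagonal_indicator hdisj he]
    exact semiconjBy_eigenvectorUnitary_spectralProjection _ _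
  exact ⟨fun x => U x * V₀, e, hU.mul contDiffOn_const, fun x hx =>
    ⟨mul_mem (hUp x hx).1 V₀.2, hspec x hx, fun i => ((hUp x hx).2 i).mul_left (hV₀ i)⟩⟩

theorem exists_contDiffOn_unitary_blockDiagonal' (hk : k ≠ 0) (hK : IsCompact K)
    (hx₀ : x₀ ∈ K) (hstar : StarConvex ℝ x₀ K) (hH : ContDiffOn ℝ k H K)
    (hherm : ∀ x ∈ K, (H x).IsHermitian) (hsum : ∑ i, m i = Fintype.card n)
    {c ε : ι → ℝ} (hε : ∀ i, 0 < ε i)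
    (hdisj : Pairwise (Function.onFun Disjoint fun i => Set.Ioo (c i - ε i) (c i + ε i)))
    (hcluster : ∀ x (hx : x ∈ K) i,
      Nat.card {a // (hherm x hx).eigenvalues a ∈ Set.Ioo (c i - ε i) (c i + ε i)} = m i) :
    ∃ (B : (i : ι) → E → Matrix (Fin (m i)) (Fin (m i)) 𝕜) (P : E → Matrix n n 𝕜)
      (e : (Σ i, Fin (m i)) ≃ n),
      (∀ i, ContDiffOn ℝ k (B i) K) ∧ ContDiffOn ℝ k P K ∧
      ∀ x ∈ K, P x ∈ unitaryGroup n 𝕜 ∧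
        (P x * H x * (P x)ᴴ).submatrix e e = blockDiagonal' (B · x) ∧
        ∀ i, (B i x).IsHermitian ∧ ‖B i x - algebraMap ℝ _ (c i)‖ ≤ ε i := by
  obtain ⟨W, e, hW, hWH⟩ := exists_contDiffOn_unitary_semiconjBy_blockProjection hk hK hx₀ hstar hH
    hherm hsum (fun i => by linarith [hε i]) hdisj hcluster
  have hP : ContDiffOn ℝ k (fun x => star (W x)) K :=
    (starL' ℝ : Matrix n n 𝕜 ≃L[ℝ] Matrix n n 𝕜).contDiff.comp_contDiffOn hW
  have hG : ContDiffOn ℝ k (fun x => star (W x) * H x * W x) K := (hP.mul hH).mul hW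
  refine ⟨fun i x => (star (W x) * H x * W x).submatrix (e ⟨i, ·⟩) (e ⟨i, ·⟩),
    fun x => star (W x), e, fun i => ?_, hP, fun x hx => ?_⟩
  · exact contDiffOn_matrix_iff.2 fun a b => contDiffOn_matrix_iff.1 hG _ _
  obtain ⟨hWx, hspec, hsemi⟩ := hWH x hx
  have hcomm i : Commute (star (W x) * H x * W x) (blockProjection 𝕜 e i) :=
    ((semiconjBy_star_of_mem_unitary hWx (hsemi i)).mul_left
      (commute_spectralProjection _ (hherm x hx)).symm).mul_left (hsemi i)
  refine ⟨Unitary.star_mem hWx, ?_, fun i => ⟨?_, ?_⟩⟩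
  · simpa only [← star_eq_conjTranspose, star_star] using
      submatrix_eq_blockDiagonal'_of_commute e hcomm
  · exact (isHermitian_conjTranspose_mul_mul (W x) (hherm x hx)).submatrix _
  · exact norm_submatrix_sub_algebraMap_le_of_semiconjBy (hherm x hx) (fun _ => isOpen_Ioo)
      hdisj hspec hWx (hsemi i) (hε i).le (Real.ball_eq_Ioo (c i) (ε i) ▸ ball_subset_closedBall)

theorem contDiffOn_meanEigenvalue {B : E → Matrix n n 𝕜} (hB : ContDiffOn ℝ k B K) :
    ContDiffOn ℝ k (fun x => meanEigenvalue (B x)) K :=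
  (RCLike.reCLM.contDiff.comp_contDiffOn
    (ContDiffOn.sum fun a _ => contDiffOn_matrix_iff.1 hB a a)).div_const _

theorem smooth_block_diagonalization_general (hk : k ≠ 0) (hK : IsCompact K) (hx₀ : x₀ ∈ K)
    (hstar : StarConvex ℝ x₀ K) (hH : ∀ a b, ContDiffOn ℝ k (fun x => H x a b) K)
    (hherm : ∀ x ∈ K, (H x).IsHermitian) (hm : ∀ i, 0 < m i)
    (hsum : ∑ i, m i = Fintype.card n) {c ε : ι → ℝ} (hε : ∀ i, 0 < ε i)
    (hdisj : Pairwise (Function.onFun Disjoint fun i => Set.Ioo (c i - ε i) (c i + ε i)))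
    (hcluster : ∀ x (hx : x ∈ K) i,
      Nat.card {a // (hherm x hx).eigenvalues a ∈ Set.Ioo (c i - ε i) (c i + ε i)} = m i) :
    ∃ (lam : ι → E → ℝ) (S : (i : ι) → E → Matrix (Fin (m i)) (Fin (m i)) 𝕜)
      (P : E → Matrix n n 𝕜) (e : (Σ i, Fin (m i)) ≃ n),
      (∀ i, ContDiffOn ℝ k (lam i) K) ∧
      (∀ i a b, ContDiffOn ℝ k (fun x => S i x a b) K) ∧
      (∀ a b, ContDiffOn ℝ k (fun x => P x a b) K) ∧
      ∀ x ∈ K, P x ∈ unitaryGroup n 𝕜 ∧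
        (∀ i, (S i x).IsHermitian ∧ (S i x).trace = 0) ∧
        (P x * H x * (P x)ᴴ).submatrix e e = blockDiagonal' (fun i => lam i x • 1 + S i x) ∧
        (∀ i, |lam i x - c i| ≤ ε i) ∧ ∀ i, ‖S i x‖ ≤ 2 * ε i := by
  obtain ⟨B, P, e, hB, hP, hblock⟩ := exists_contDiffOn_unitary_blockDiagonal' hk hK hx₀ hstar
    (contDiffOn_matrix_iff.2 hH) hherm hsum hε hdisj hcluster
  have := fun i => Fin.pos_iff_nonempty.1 (hm i)
  have hlam i := contDiffOn_meanEigenvalue (hB i)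
  refine ⟨fun i x => meanEigenvalue (B i x),
    fun i x => B i x - algebraMap ℝ _ (meanEigenvalue (B i x)), P, e, hlam,
    fun i => contDiffOn_matrix_iff.1 ((hB i).sub ?_), contDiffOn_matrix_iff.1 hP, fun x hx => ?_⟩
  · exact (algebraMapCLM ℝ (Matrix (Fin (m i)) (Fin (m i)) 𝕜)).contDiff.comp_contDiffOn (hlam i)
  obtain ⟨hPx, hform, hBx⟩ := hblock x hx
  refine ⟨hPx, fun i => ⟨?_, trace_sub_meanEigenvalue (hBx i).1⟩, ?_,
    fun i => abs_meanEigenvalue_sub_le (hBx i).2, fun i => norm_sub_meanEigenvalue_le (hBx i).2⟩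
  · exact (hBx i).1.sub (IsSelfAdjoint.algebraMap _ (.all _)).isHermitian
  · simpa only [← Algebra.algebraMap_eq_smul_one, add_sub_cancel] using hform

end SmoothBlocks

end Matrices

section Gaps

theorem le_dist_of_le_gaps {L : ℕ} {c : Fin L → ℝ} (hc : Monotone c) {r : ℝ}
    (hr : ∀ (i : Fin L) (h : (i : ℕ) + 1 < L), r ≤ c ⟨(i : ℕ) + 1, h⟩ - c i) {i j : Fin L}
    (hij : i ≠ j) : r ≤ dist (c i) (c j) := by
  wlog hlt : i < j generalizing i j
  · rw [dist_comm]
    exact this hij.symm (hij.lt_or_gt.resolve_left hlt)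
  have hnext : (i : ℕ) + 1 < L := lt_of_le_of_lt hlt j.2
  calc r ≤ c ⟨(i : ℕ) + 1, hnext⟩ - c i := hr i hnext
    _ ≤ c j - c i := sub_le_sub_right (hc hlt) _
    _ ≤ dist (c i) (c j) := by
      rw [dist_comm]
      exact le_abs_self _

theorem pairwise_disjoint_Ioo_of_le_dist {ι : Type*} {c : ι → ℝ} {r ε : ℝ} (hε : ε ≤ r / 2)
    (hc : ∀ {i j}, i ≠ j → r ≤ dist (c i) (c j)) :
    Pairwise (Function.onFun Disjoint fun i => Set.Ioo (c i - ε) (c i + ε)) := fun i j hij => by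
  simp only [Function.onFun, ← Real.ball_eq_Ioo]
  exact ball_disjoint_ball (by linarith [hc hij])

theorem le_dist_of_dist_le {X : Type*} [PseudoMetricSpace X] {a b x y : X} {r ε δ : ℝ}
    (hab : r ≤ dist a b) (hx : dist x a ≤ ε) (hy : dist y b ≤ δ) : r - ε - δ ≤ dist x y := by
  linarith [dist_triangle4 a x y b, dist_comm x a]

end Gaps

/-- block diagonalization of clustered symmetric matrix families.
Eigenvalues are counted with multiplicity using `Matrix.IsHermitian.eigenvalues`. -/
theorem smooth_block_diagonalization
    (n L : ℕ) (hn : 1 ≤ n) (hL : 2 ≤ L)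
    (m : Fin L → ℕ) (hm : ∀ i, 0 < m i) (hsum : ∑ i, m i = n)
    (lamStar : Fin L → ℝ) (hlamStar : StrictMono lamStar)
    (hlamStarSum : ∑ i, (m i : ℝ) * lamStar i = 0)
    (r : ℝ)
    (hr : IsLeast {d : ℝ | ∃ i : Fin L, ∃ h : (i : ℕ) + 1 < L,
      d = lamStar ⟨(i : ℕ) + 1, h⟩ - lamStar i} r)
    (ε : ℝ) (hε : 0 < ε) (hεr : ε ≤ r / 4)
    (H : EuclideanSpace ℝ (Fin n) → Matrix (Fin n) (Fin n) ℝ)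
    (hHsmooth : ∀ a b : Fin n, ContDiffOn ℝ (⊤ : ℕ∞) (fun x => H x a b) (ball 0 4))
    (hHsymm : ∀ x ∈ ball (0 : EuclideanSpace ℝ (Fin n)) 4, (H x).IsSymm)
    (hHtrace : ∀ x ∈ ball (0 : EuclideanSpace ℝ (Fin n)) 4, (H x).trace = 0)
    (hcluster : ∀ x ∈ closedBall (0 : EuclideanSpace ℝ (Fin n)) 2,
      ∀ (hx : (H x).IsHermitian) (i : Fin L),
        (Finset.univ.filter (fun a : Fin n =>
          hx.eigenvalues a ∈ Set.Ioo (lamStar i - ε) (lamStar i + ε))).card = m i) :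
    ∃ (lam : Fin L → EuclideanSpace ℝ (Fin n) → ℝ)
      (S : (i : Fin L) → EuclideanSpace ℝ (Fin n) → Matrix (Fin (m i)) (Fin (m i)) ℝ)
      (P : EuclideanSpace ℝ (Fin n) → Matrix (Fin n) (Fin n) ℝ)
      (e : (Σ i : Fin L, Fin (m i)) ≃ Fin n),
      (∀ i, ContDiffOn ℝ (⊤ : ℕ∞) (lam i) (ball 0 2)) ∧
      (∀ i (a b : Fin (m i)), ContDiffOn ℝ (⊤ : ℕ∞) (fun x => S i x a b) (ball 0 2)) ∧
      (∀ a b : Fin n, ContDiffOn ℝ (⊤ : ℕ∞) (fun x => P x a b) (ball 0 2)) ∧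
      ∀ x ∈ ball (0 : EuclideanSpace ℝ (Fin n)) 2,
        ((P x)ᵀ * P x = 1) ∧
        (∀ i, (S i x).IsSymm ∧ (S i x).trace = 0) ∧
        -- (i) block diagonal form
        ((P x * H x * (P x)ᵀ).submatrix e e =
          Matrix.blockDiagonal' (fun i => lam i x • (1 : Matrix (Fin (m i)) (Fin (m i)) ℝ) + S i x)) ∧
        -- (ii) gaps of the λᵢ
        (∀ i : Fin L, ∀ h : (i : ℕ) + 1 < L, |lam ⟨(i : ℕ) + 1, h⟩ x - lam i x| ≥ r / 2) ∧
        -- (iii) closeness to the λᵢ*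
        (∀ i : Fin L, |lam i x - lamStar i| ≤ ε) ∧
        -- (iv) smallness of the Sᵢ
        (∀ i : Fin L, matrixOpNorm (S i x) ≤ 4 * ε) := by
  have hgap {i j : Fin L} (hij : i ≠ j) : r ≤ dist (lamStar i) (lamStar j) :=
    le_dist_of_le_gaps hlamStar.monotone (fun i h => hr.2 ⟨i, h, rfl⟩) hij
  have hball : closedBall (0 : EuclideanSpace ℝ (Fin n)) 2 ⊆ ball 0 4 :=
    closedBall_subset_ball (by norm_num)
  have hzero : (0 : EuclideanSpace ℝ (Fin n)) ∈ closedBall 0 2 := mem_closedBall_self zero_le_two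
  have hherm x (hx : x ∈ closedBall 0 2) : (H x).IsHermitian :=
    isHermitian_iff_isSymm.2 (hHsymm x (hball hx))
  obtain ⟨lam, S, P, e, hlam, hS, hP, hblock⟩ := smooth_block_diagonalization_general
    (k := (⊤ : ℕ∞)) (by simp) (isCompact_closedBall _ _) hzero
    ((convex_closedBall _ _).starConvex hzero) (fun a b => (hHsmooth a b).mono hball) hherm hm
    (by simpa using hsum) (fun _ => hε) (pairwise_disjoint_Ioo_of_le_dist (by linarith) hgap)
    fun x hx i => by
      rw [Nat.card_eq_fintype_card, Fintype.card_subtype]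
      exact hcluster x hx (hherm x hx) i
  refine ⟨lam, S, P, e, fun i => (hlam i).mono ball_subset_closedBall,
    fun i a b => (hS i a b).mono ball_subset_closedBall,
    fun a b => (hP a b).mono ball_subset_closedBall, fun x hx => ?_⟩
  obtain ⟨hPx, hSx, hform, hclose, hsmall⟩ := hblock x (ball_subset_closedBall hx)
  simp only [mem_unitaryGroup_iff', star_eq_conjTranspose, conjTranspose_eq_transpose_of_trivial]
    at hPx hform
  refine ⟨hPx, fun i => (hSx i).imp_left isHermitian_iff_isSymm.1, hform, fun i h => ?_, hclose,
    fun i => (hsmall i).trans (by linarith)⟩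
  have hne : (⟨(i : ℕ) + 1, h⟩ : Fin L) ≠ i := Fin.ne_of_val_ne (Nat.succ_ne_self i)
  have hsep := le_dist_of_dist_le (hgap hne) (hclose _) (hclose i)
  exact le_trans (by linarith) hsep
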